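/- arXiv:1711.08890 — 2 statements merged into one kernel-verified Lean document; each statement's English description precedes it below -/
import Mathlib

section
/- Every connected {Z₂, T_{1,1,3}}-free graph on at least 2 vertices has edge-connectivity equal to its minimum degree. -/
open SimpleGraph

/-- The edge-connectivity of `G`: the minimum number of edges whose deletion disconnects `G`. -/
noncomputable def edgeConn {V : Type*} [Fintype V] (G : SimpleGraph V) : ℕ :=
  sInf {k | ∃ F : Finset (Sym2 V), ↑F ⊆ G.edgeSet ∧ F.card = k ∧ ¬ (G.deleteEdges ↑F).Connected}

/-- The minimum degree of `G`. -/
noncomputable def minDeg {V : Type*} [Fintype V] (G : SimpleGraph V) : ℕ :=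
  sInf {d | ∃ v : V, d = (G.neighborSet v).ncard}

/-- `Z₂`: a triangle `{0,1,2}` with a pendant path `2-3-4` of length 2. -/
def Z2 : SimpleGraph (Fin 5) :=
  SimpleGraph.fromEdgeSet {s(0,1), s(0,2), s(1,2), s(2,3), s(3,4)}

/-- `T_{1,1,3}`: three paths of lengths 1, 1, 3 sharing the common endpoint `0`:
legs `0-1`, `0-2` and path `0-3-4-5`. -/
def T113 : SimpleGraph (Fin 6) :=
  SimpleGraph.fromEdgeSet {s(0,1), s(0,2), s(0,3), s(3,4), s(4,5)}

section Helpers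
open Classical Finset

variable {V : Type*} [Fintype V] (G : SimpleGraph V)

lemma noZ2 (hZ2 : IsEmpty (Z2 ↪g G)) {a b c d e : V} (hab : G.Adj a b) (hac : G.Adj a c)
    (hbc : G.Adj b c) (hcd : G.Adj c d) (hde : G.Adj d e) (had : ¬ G.Adj a d)
    (hae : ¬ G.Adj a e) (hbd : ¬ G.Adj b d) (hbe : ¬ G.Adj b e) (hce : ¬ G.Adj c e) : False := by
  have s := fun u v : V => G.adj_comm u v
  have r := fun u : V => G.loopless.irrefl u
  have key : ∀ i j : Fin 5, G.Adj (![a,b,c,d,e] i) (![a,b,c,d,e] j) ↔ Z2.Adj i j := by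
    intro i j
    fin_cases i <;> fin_cases j <;> simp [Z2, *] <;> grind
  refine hZ2.false ⟨⟨![a,b,c,d,e], ?_⟩, ?_⟩
  · intro i j hij
    fin_cases i <;> fin_cases j <;> simp at hij ⊢ <;> grind
  · intro i j
    exact key i j

lemma noT (hT : IsEmpty (T113 ↪g G)) {c l m p q t : V} (hcl : G.Adj c l) (hcm : G.Adj c m)
    (hcp : G.Adj c p) (hpq : G.Adj p q) (hqt : G.Adj q t) (hne : l ≠ m)
    (hlm : ¬ G.Adj l m) (hlp : ¬ G.Adj l p) (hlq : ¬ G.Adj l q) (hlt : ¬ G.Adj l t)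
    (hmp : ¬ G.Adj m p) (hmq : ¬ G.Adj m q) (hmt : ¬ G.Adj m t)
    (hcq : ¬ G.Adj c q) (hct : ¬ G.Adj c t) (hpt : ¬ G.Adj p t) : False := by
  have s := fun u v : V => G.adj_comm u v
  have r := fun u : V => G.loopless.irrefl u
  have key : ∀ i j : Fin 6, G.Adj (![c,l,m,p,q,t] i) (![c,l,m,p,q,t] j) ↔ T113.Adj i j := by
    intro i j
    fin_cases i <;> fin_cases j <;> simp [T113, *] <;> grind
  refine hT.false ⟨⟨![c,l,m,p,q,t], ?_⟩, ?_⟩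
  · intro i j hij
    fin_cases i <;> fin_cases j <;> simp at hij ⊢ <;> grind
  · intro i j
    exact key i j

noncomputable def cutE (X : Finset V) : Finset (V × V) :=
  univ.filter (fun p => p.1 ∈ X ∧ p.2 ∉ X ∧ G.Adj p.1 p.2)
noncomputable def bd (X : Finset V) : Finset V := X.filter (fun v => ∃ w, w ∉ X ∧ G.Adj v w)
noncomputable def inr (X : Finset V) : Finset V := X.filter (fun v => ∀ w, G.Adj v w → w ∈ X)

lemma cut_compl (X : Finset V) : (cutE G Xᶜ).card = (cutE G X).card := by
  refine Finset.card_bij (fun p _ => (p.2, p.1)) ?_ ?_ ?_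
  · intro p hp; simp [cutE] at hp ⊢; exact ⟨hp.2.1, hp.1, hp.2.2.symm⟩
  · rintro ⟨a, b⟩ _ ⟨c, d⟩ _ h; simp at h ⊢; exact ⟨h.2, h.1⟩
  · rintro ⟨a, b⟩ h; refine ⟨(b, a), ?_, rfl⟩
    simp [cutE] at h ⊢; exact ⟨h.2.1, h.1, h.2.2.symm⟩

lemma bd_le (X : Finset V) : (bd G X).card ≤ (cutE G X).card := by
  have : bd G X ⊆ (cutE G X).image Prod.fst := by
    intro v hv
    simp [bd] at hv
    obtain ⟨hv, w, hw, h⟩ := hv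
    simp [cutE]
    exact ⟨hv, w, hw, h⟩
  exact (card_le_card this).trans card_image_le

lemma bd_erase_le (X : Finset V) {a : V} (ha : a ∈ X) :
    (G.neighborFinset a \ X).card + ((bd G X).erase a).card ≤ (cutE G X).card := by
  rw [← Finset.card_filter_add_card_filter_not (s := cutE G X) (fun p => p.1 = a)]
  refine add_le_add ?_ ?_
  · refine card_le_card_of_injOn (fun w => (a, w)) ?_ ?_
    · intro w hw; simp at hw; simp [cutE]; exact ⟨ha, hw.2, hw.1⟩
    · intro w _ w' _ h; simpa using h
  · have : (bd G X).erase a ⊆ ((cutE G X).filter (fun p => ¬ p.1 = a)).image Prod.fst := by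
      intro v hv
      simp [bd] at hv
      obtain ⟨hva, hv, w, hw, h⟩ := hv
      simp [cutE]
      exact ⟨⟨hv, w, hw, h⟩, hva⟩
    exact (card_le_card this).trans card_image_le

lemma deg_split (X : Finset V) (a : V) :
    (G.neighborFinset a).card ≤ (G.neighborFinset a ∩ inr G X).card +
      (G.neighborFinset a \ X).card + (G.neighborFinset a ∩ bd G X).card := by
  have : G.neighborFinset a ⊆ (G.neighborFinset a ∩ inr G X) ∪
      (G.neighborFinset a \ X) ∪ (G.neighborFinset a ∩ bd G X) := by
    intro w hw
    simp only [mem_union, mem_inter, mem_sdiff, inr, bd, mem_filter]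
    by_cases h : w ∈ X
    · by_cases h' : ∀ u, G.Adj w u → u ∈ X
      · exact Or.inl (Or.inl ⟨hw, h, h'⟩)
      · push Not at h'
        obtain ⟨u, h1, h2⟩ := h'
        exact Or.inr ⟨hw, h, u, h2, h1⟩
    · exact Or.inl (Or.inr ⟨hw, h⟩)
  refine (card_le_card this).trans ((card_union_le _ _).trans ?_)
  exact Nat.add_le_add_right (card_union_le _ _) _

lemma K {d : ℕ} (hd : ∀ v, d ≤ (G.neighborFinset v).card) (X : Finset V)
    (hX : (cutE G X).card < d) {a : V} (ha : a ∈ bd G X) :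
    ((bd G X).erase a).card + 1 ≤ (G.neighborFinset a ∩ inr G X).card +
      (G.neighborFinset a ∩ bd G X).card := by
  have h1 := hd a
  have h2 := deg_split G X a
  have h3 := bd_erase_le G X (a := a) (by simp [bd] at ha; exact ha.1)
  omega

lemma nb_sub (X : Finset V) (a : V) : (G.neighborFinset a ∩ bd G X) ⊆ (bd G X).erase a := by
  intro w hw
  simp at hw ⊢
  exact ⟨hw.1.ne', hw.2⟩

lemma bd_nbr {d : ℕ} (hd : ∀ v, d ≤ (G.neighborFinset v).card) (X : Finset V)
    (hX : (cutE G X).card < d) {a : V} (ha : a ∈ bd G X) : ∃ x ∈ inr G X, G.Adj a x := by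
  have h1 := K G hd X hX ha
  have h2 := card_le_card (nb_sub G X a)
  obtain ⟨x, hx⟩ := card_pos.1 (show 0 < (G.neighborFinset a ∩ inr G X).card by omega)
  simp at hx
  exact ⟨x, hx.2, hx.1⟩

lemma inr_split (X : Finset V) {x : V} (hx : x ∈ inr G X) :
    (G.neighborFinset x).card ≤ (G.neighborFinset x ∩ inr G X).card +
      (G.neighborFinset x ∩ bd G X).card := by
  have h2 := deg_split G X x
  have : G.neighborFinset x \ X = ∅ := by
    ext w
    simp [inr] at hx ⊢
    exact hx.2 w
  rw [this] at h2
  simpa using h2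

lemma inr_nbr {d : ℕ} (hd : ∀ v, d ≤ (G.neighborFinset v).card) (X : Finset V)
    (hX : (cutE G X).card < d) {x : V} (hx : x ∈ inr G X) : ∃ y ∈ inr G X, G.Adj x y := by
  have h1 := inr_split G X hx
  have h2 := card_le_card (inter_subset_right : G.neighborFinset x ∩ bd G X ⊆ bd G X)
  have h3 := bd_le G X
  have h4 := hd x
  obtain ⟨x, hx⟩ := card_pos.1 (show 0 < (G.neighborFinset x ∩ inr G X).card by omega)
  simp at hx
  exact ⟨x, hx.2, hx.1⟩

/-- The tail argument: a set `R` attached through one edge `r q` at the end of an induced path. -/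
lemma tail (hZ2 : IsEmpty (Z2 ↪g G)) (hT : IsEmpty (T113 ↪g G))
    (hd : ∀ v, 2 ≤ (G.neighborFinset v).card) : ∀ (n : ℕ) (R : Finset V) (o p q r : V),
    R.card = n → r ∈ R → o ∉ R → p ∉ R → q ∉ R → G.Adj o p → G.Adj p q → G.Adj q r →
    ¬ G.Adj o q → o ≠ q → (∀ v ∈ R, ∀ w, G.Adj v w → w ∈ R ∨ (v = r ∧ w = q)) → False := by
  intro n
  induction n with
  | zero => intro R o p q r h hr; simp at h; simp [h] at hr
  | succ n ih =>
    intro R o p q r hc hr ho hp hq hop hpq hqr hoq hoq' hR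
    have h1 : 1 ≤ ((G.neighborFinset r).erase q).card := by
      have := hd r
      have := pred_card_le_card_erase (s := G.neighborFinset r) (a := q)
      omega
    obtain ⟨u, hu⟩ := card_pos.1 h1
    simp at hu
    have s := fun u v : V => G.adj_comm u v
    have uniq : ∀ v, G.Adj r v → v ≠ q → v = u := by
      intro v hv hvq
      clear ih hd
      have hpq' := hpq.ne
      by_contra hne
      have hvR : v ∈ R := by have := hR r hr v hv; tauto
      have huR : u ∈ R := by have := hR r hr u hu.2; tauto
      have hvr := hv.ne
      have hur := hu.2.ne
      by_cases huv : G.Adj u v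
      · exact noZ2 G hZ2 (a := u) (b := v) (c := r) (d := q) (e := p) huv hu.2.symm hv.symm
          hqr.symm hpq.symm (by grind) (by grind) (by grind) (by grind) (by grind)
      · exact noT G hT (c := r) (l := u) (m := v) (p := q) (q := p) (t := o) hu.2 hv hqr.symm
          hpq.symm hop.symm (Ne.symm hne) huv (by grind) (by grind) (by grind) (by grind)
          (by grind) (by grind) (by grind) (by grind) (by grind)
    have huR : u ∈ R := by have := hR r hr u hu.2; tauto
    refine ih (R.erase r) p q r u ?_ ?_ ?_ ?_ ?_ hpq hqr hu.2 ?_ (by rintro rfl; exact hp hr) ?_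
    · rw [card_erase_of_mem hr]; omega
    · simp [huR, hu.2.ne']
    · simp [hp]
    · simp [hq]
    · simp
    · intro h
      have := hR r hr p h.symm
      have := hpq.ne
      tauto
    · intro v hv w hvw
      simp at hv ⊢
      have h := hR v hv.2 w hvw
      by_cases hw : w = r
      · right
        subst hw
        refine ⟨uniq v hvw.symm ?_, rfl⟩
        rintro rfl
        exact hq hv.2
      · left
        refine ⟨hw, ?_⟩
        tauto

lemma main (hZ2 : IsEmpty (Z2 ↪g G)) (hT : IsEmpty (T113 ↪g G)) {d : ℕ}
    (hd : ∀ v, d ≤ (G.neighborFinset v).card) (X : Finset V)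
    (hX : (cutE G X).card < d) {a b : V} (ha : a ∈ X) (hb : b ∉ X) (hab : G.Adj a b) : False := by
  have s := fun u v : V => G.adj_comm u v
  have hX' : (cutE G Xᶜ).card < d := by rwa [cut_compl]
  have hb1 : b ∈ bd G Xᶜ := by simp [bd]; exact ⟨hb, a, ha, hab.symm⟩
  obtain ⟨y, hy, hby⟩ := bd_nbr G hd _ hX' hb1
  obtain ⟨y', hy', hyy'⟩ := inr_nbr G hd _ hX' hy
  -- adjacency facts between the two sides
  have Y0 : ∀ z ∈ inr G Xᶜ, z ∉ X ∧ ∀ w ∈ X, ¬ G.Adj w z := by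
    intro z hz
    simp [inr] at hz
    exact ⟨hz.1, fun w hw h => hz.2 w h.symm hw⟩
  have X0 : ∀ z ∈ inr G X, z ∈ X ∧ ∀ w, w ∉ X → ¬ G.Adj z w := by
    intro z hz
    simp [inr] at hz
    exact ⟨hz.1, fun w hw h => hw (hz.2 w h)⟩
  have B0 : ∀ z ∈ bd G X, z ∈ X := by
    intro z hz; simp [bd] at hz; exact hz.1
  -- uniqueness of the interior neighbour of every boundary vertex
  have uniq : ∀ a ∈ bd G X, ∀ x ∈ inr G X, ∀ z ∈ inr G X, G.Adj a x → G.Adj a z → x = z := by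
    intro a ha x hx z hz hax haz
    simp [bd] at ha
    obtain ⟨ha, b, hb, hab⟩ := ha
    have hb1 : b ∈ bd G Xᶜ := by simp [bd]; exact ⟨hb, a, ha, hab.symm⟩
    obtain ⟨y, hy, hby⟩ := bd_nbr G hd _ hX' hb1
    obtain ⟨y', hy', hyy'⟩ := inr_nbr G hd _ hX' hy
    have x0 := X0 x hx
    have z0 := X0 z hz
    have y0 := Y0 y hy
    have y0' := Y0 y' hy'
    by_contra hne
    have hby' : ¬ G.Adj b y' := by
      intro h
      exact noZ2 G hZ2 (a := y) (b := y') (c := b) (d := a) (e := x) hyy' hby.symm h.symm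
        hab.symm hax (by grind) (by grind) (by grind) (by grind) (by grind)
    by_cases hxz : G.Adj x z
    · exact noZ2 G hZ2 (a := x) (b := z) (c := a) (d := b) (e := y) hxz hax.symm haz.symm
        hab hby (by grind) (by grind) (by grind) (by grind) (by grind)
    · exact noT G hT (c := a) (l := x) (m := z) (p := b) (q := y) (t := y') hax haz hab hby hyy'
        hne hxz (by grind) (by grind) (by grind) (by grind) (by grind) (by grind) (by grind)
        (by grind) (by grind)
  have ha1 : a ∈ bd G X := by simp [bd]; exact ⟨ha, b, hb, hab⟩
  obtain ⟨x, hx, hax⟩ := bd_nbr G hd _ hX ha1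
  obtain ⟨x', hx', hxx'⟩ := inr_nbr G hd _ hX hx
  have x0 := X0 x hx
  have y0 := Y0 y hy
  have uniq2 : ∀ z ∈ inr G X, G.Adj x z → z = x' := by
    intro z hz hxz
    by_contra hne
    have z0 := X0 z hz
    have x0' := X0 x' hx'
    have haz : ¬ G.Adj a z := fun h => hxz.ne (uniq a ha1 x hx z hz hax h)
    have hax' : ¬ G.Adj a x' := fun h => hxx'.ne (uniq a ha1 x hx x' hx' hax h)
    by_cases hzx' : G.Adj z x'
    · exact noZ2 G hZ2 (a := z) (b := x') (c := x) (d := a) (e := b) hzx' hxz.symm hxx'.symm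
        hax.symm hab (by grind) (by grind) (by grind) (by grind) (by grind)
    · exact noT G hT (c := x) (l := z) (m := x') (p := a) (q := b) (t := y) hxz hxx' hax.symm hab
        hby hne hzx' (by grind) (by grind) (by grind) (by grind) (by grind) (by grind) (by grind)
        (by grind) (by grind)
  have hcnt : ∀ v, (∀ z ∈ inr G X, G.Adj v z → z = x') →
      (G.neighborFinset v ∩ inr G X).card ≤ 1 := by
    intro v hv
    rw [card_le_one]
    intro u hu w hw
    simp at hu hw
    rw [hv u hu.2 hu.1, hv w hw.2 hw.1]
  have hsplit := inr_split G X hx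
  have h1 := hcnt x uniq2
  have hdx := hd x
  have hbl := bd_le G X
  have hsub : G.neighborFinset x ∩ bd G X ⊆ bd G X := inter_subset_right
  have hEq : G.neighborFinset x ∩ bd G X = bd G X :=
    eq_of_subset_of_card_le hsub (by omega)
  have hall : ∀ c ∈ bd G X, G.Adj x c := by
    intro c hc
    rw [← hEq] at hc
    simp at hc
    exact hc.1
  have hbpos : 0 < (bd G X).card := card_pos.2 ⟨a, ha1⟩
  by_cases hone : (bd G X).card ≤ 1
  · -- bridge case
    have hbd : ∀ c ∈ bd G X, c = a := fun c hc => card_le_one.1 hone c hc a ha1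
    refine tail G hZ2 hT (fun v => le_trans (by omega) (hd v)) _ (inr G X) y b a x rfl hx
      (fun h => y0.1 (X0 _ h).1) (fun h => hb (X0 _ h).1) ?_ hby.symm hab.symm hax ?_
      (by rintro rfl; exact y0.1 ha) ?_
    · intro h; exact (X0 a h).2 b hb hab
    · intro h; exact y0.2 a ha h.symm
    · intro v hv w hvw
      by_cases hw : w ∈ inr G X
      · exact Or.inl hw
      · right
        have hwX : w ∈ X := by
          by_contra h; exact (X0 v hv).2 w h hvw
        have hwb : w ∈ bd G X := by
          simp [inr, bd, hwX] at hw ⊢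
          obtain ⟨u, h1, h2⟩ := hw
          exact ⟨u, h2, h1⟩
        have := hbd w hwb
        subst this
        exact ⟨uniq w ha1 v hv x hx hvw.symm hax, rfl⟩
  · obtain ⟨c, hc, hca⟩ := exists_mem_ne (by omega : 1 < (bd G X).card) a
    have hac : G.Adj a c := by
      have hK := K G hd X hX ha1
      have h2 : (G.neighborFinset a ∩ inr G X).card ≤ 1 := by
        rw [card_le_one]
        intro u hu w hw
        simp at hu hw
        exact uniq a ha1 u hu.2 w hw.2 hu.1 hw.1
      have h3 : G.neighborFinset a ∩ bd G X = (bd G X).erase a :=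
        eq_of_subset_of_card_le (nb_sub G X a) (by omega)
      have : c ∈ (bd G X).erase a := by simp [hca, hc]
      rw [← h3] at this
      simp at this
      exact this.1
    have hnb : ∀ z ∈ inr G X, z ≠ x → ∀ e ∈ bd G X, ¬ G.Adj z e := by
      intro z hz hzx e he h
      exact hzx (uniq e he z hz x hx h.symm (hall e he).symm)
    -- another neighbour of x'
    have hsp := inr_split G X hx'
    have hemp : G.neighborFinset x' ∩ bd G X = ∅ := by
      ext w
      simp
      intro h1 h2
      exact hnb x' hx' hxx'.ne' w h2 h1
    rw [hemp, card_empty] at hsp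
    have := hd x'
    obtain ⟨z, hz, hzx⟩ := exists_mem_ne
      (by omega : 1 < (G.neighborFinset x' ∩ inr G X).card) x
    simp at hz
    have n1 := hnb x' hx' hxx'.ne'
    have n2 := hnb z hz.2 hzx
    have hxz : ¬ G.Adj x z := fun h => hz.1.ne (uniq2 z hz.2 h).symm
    exact noZ2 G hZ2 (a := a) (b := c) (c := x) (d := x') (e := z) hac hax (hall c hc).symm hxx'
      hz.1 (by grind) (by grind) (by grind) (by grind) hxz

end Helpers

/-- Every connected `{Z₂, T_{1,1,3}}`-free graph on at least 2 vertices has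
edge-connectivity equal to its minimum degree. -/
theorem z2_t113_free_edgeConn_eq_minDeg {V : Type*} [Fintype V] (G : SimpleGraph V)
    (hG : G.Connected) (hcard : 2 ≤ Fintype.card V)
    (hZ2 : IsEmpty (Z2 ↪g G)) (hT : IsEmpty (T113 ↪g G)) :
    edgeConn G = minDeg G := by
  classical
  have hne : Nonempty V := hG.nonempty
  have hnc : ∀ v, (G.neighborSet v).ncard = (G.neighborFinset v).card := by
    intro v
    rw [Set.ncard_eq_toFinset_card']
    rfl
  have hmin : ∀ v, minDeg G ≤ (G.neighborFinset v).card := by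
    intro v
    exact Nat.sInf_le ⟨v, (hnc v).symm⟩
  obtain ⟨v, hv⟩ : minDeg G ∈ {d | ∃ v : V, d = (G.neighborSet v).ncard} :=
    Nat.sInf_mem ⟨_, hne.some, rfl⟩
  have hmem : minDeg G ∈ {k | ∃ F : Finset (Sym2 V), ↑F ⊆ G.edgeSet ∧ F.card = k ∧
      ¬ (G.deleteEdges ↑F).Connected} := by
    refine ⟨G.incidenceFinset v, ?_, ?_, ?_⟩
    · rw [coe_incidenceFinset]; exact G.incidenceSet_subset v
    · rw [hv, hnc, card_incidenceFinset_eq_degree]; rfl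
    · intro h
      haveI : Nontrivial V := Fintype.one_lt_card_iff_nontrivial.1 hcard
      obtain ⟨w, hw⟩ := h.preconnected.exists_adj_of_nontrivial v
      rw [deleteEdges_adj] at hw
      apply hw.2
      simp [hw.1]
  refine le_antisymm (Nat.sInf_le hmem) ?_
  obtain ⟨F, hF, hFc, hFn⟩ := Nat.sInf_mem ⟨_, hmem⟩
  change F.card = edgeConn G at hFc
  by_contra hlt
  rw [not_le, ← hFc] at hlt
  have : ¬ (G.deleteEdges ↑F).Preconnected := fun h => hFn ⟨h⟩
  simp only [Preconnected, not_forall] at this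
  obtain ⟨u, w, huw⟩ := this
  let X : Finset V := Finset.univ.filter (fun z => (G.deleteEdges ↑F).Reachable u z)
  have hXm : ∀ z, z ∈ X ↔ (G.deleteEdges ↑F).Reachable u z := by intro z; simp [X]
  have hcut : (cutE G X).card ≤ F.card := by
    refine Finset.card_le_card_of_injOn (fun p => s(p.1, p.2)) ?_ ?_
    · rintro ⟨a, b⟩ h
      simp [cutE] at h
      by_contra hn
      obtain ⟨h1, h2, h3⟩ := h
      rw [hXm] at h1 h2
      apply h2
      refine h1.trans (Adj.reachable ?_)
      rw [deleteEdges_adj]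
      exact ⟨h3, hn⟩
    · rintro ⟨a, b⟩ h ⟨c, e⟩ h' heq
      simp [cutE] at h h' heq ⊢
      rcases heq with heq | heq
      · exact heq
      · rw [heq.1] at h
        exact absurd h.1 h'.2.1
  obtain ⟨a, ha, b, hb, hab⟩ : ∃ a ∈ X, ∃ b, b ∉ X ∧ G.Adj a b := by
    by_contra hcon
    push Not at hcon
    have hcl : ∀ a b, G.Reachable a b → a ∈ X → b ∈ X := by
      rintro a b ⟨p⟩
      induction p with
      | nil => exact id
      | cons h p ih =>
        intro ha
        apply ih
        by_contra hb
        exact hcon _ ha _ hb h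
    exact huw ((hXm w).1 (hcl u w (hG.preconnected u w) ((hXm u).2 (Reachable.refl u))))
  exact main G hZ2 hT hmin X (lt_of_le_of_lt hcut hlt) ha hb hab
end

section
/- If G is a connected bipartite graph on n vertices with n ≤ 4δ(G) − 1, then the edge-connectivity of G equals its minimum degree. -/
open SimpleGraph

lemma minDeg_le_aux {V : Type*} [Fintype V] (G : SimpleGraph V) (v : V) :
    minDeg G ≤ (G.neighborSet v).ncard := Nat.sInf_le ⟨v, rfl⟩

/-- If fewer than `δ` edges leave `S`, every vertex of `S` has a neighbour all of whose
neighbours lie in `S`. -/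
lemma cut_aux {V : Type*} [Fintype V] (G : SimpleGraph V) (F : Finset (Sym2 V)) (S : Set V)
    (hS : ∀ x ∈ S, ∀ y ∉ S, G.Adj x y → s(x, y) ∈ F) (hF : F.card < minDeg G)
    (v : V) (hv : v ∈ S) : ∃ w ∈ S, G.Adj v w ∧ G.neighborSet w ⊆ S := by
  classical
  by_contra! hcon
  have h1 : ∀ w, w ∈ S → G.Adj v w → ∃ y, G.Adj w y ∧ y ∉ S := by
    intro w hw hvw
    obtain ⟨y, hy, hy'⟩ := Set.not_subset.1 (hcon w hw hvw)
    exact ⟨y, hy, hy'⟩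
  choose! f hf1 hf2 using h1
  have h2 : (G.neighborSet v).ncard ≤ (F : Set (Sym2 V)).ncard := by
    apply Set.ncard_le_ncard_of_injOn (fun w => if w ∈ S then s(w, f w) else s(v, w))
    · intro w hw
      have hw : G.Adj v w := hw
      by_cases hwS : w ∈ S
      · simp only [hwS, if_true]
        exact hS w hwS _ (hf2 w hwS hw) (hf1 w hwS hw)
      · simp only [hwS, if_false]
        exact hS v hv _ hwS hw
    · intro a ha b hb hab
      have ha : G.Adj v a := ha
      have hb : G.Adj v b := hb
      have hva := ha.ne
      have hvb := hb.ne
      have ha2 := fun h => hf2 a h ha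
      have hb2 := fun h => hf2 b h hb
      by_cases haS : a ∈ S <;> by_cases hbS : b ∈ S <;>
        simp only [haS, hbS, if_true, if_false, Sym2.eq_iff] at hab <;> grind
  rw [Set.ncard_coe_finset] at h2
  have := minDeg_le_aux G v
  omega

lemma side_aux {V : Type*} [Fintype V] (G : SimpleGraph V) (hbip : G.Colorable 2)
    (F : Finset (Sym2 V)) (S : Set V)
    (hS : ∀ x ∈ S, ∀ y ∉ S, G.Adj x y → s(x, y) ∈ F) (hF : F.card < minDeg G)
    (v : V) (hv : v ∈ S) : 2 * minDeg G ≤ S.ncard := by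
  obtain ⟨w, hw, -, hwS⟩ := cut_aux G F S hS hF v hv
  obtain ⟨x, hx, hwx, hxS⟩ := cut_aux G F S hS hF w hw
  obtain ⟨c⟩ := hbip
  have hd : Disjoint (G.neighborSet w) (G.neighborSet x) := by
    rw [Set.disjoint_left]
    intro a ha hb
    have h1 := c.valid hwx
    have h2 := c.valid (show G.Adj w a from ha)
    have h3 := c.valid (show G.Adj x a from hb)
    omega
  have h4 := Set.ncard_union_eq hd (Set.toFinite _) (Set.toFinite _)
  have h5 := Set.ncard_le_ncard (Set.union_subset hwS hxS) (Set.toFinite _)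
  have := minDeg_le_aux G w
  have := minDeg_le_aux G x
  omega

/-- Volkmann: a connected bipartite graph with `n ≤ 4δ(G) - 1` has `κ'(G) = δ(G)`. -/
theorem volkmann_bipartite_edgeConn_eq_minDeg {V : Type*} [Fintype V] (G : SimpleGraph V)
    (hG : G.Connected) (hcard : 2 ≤ Fintype.card V)
    (hbip : G.Colorable 2) (h : Fintype.card V ≤ 4 * minDeg G - 1) :
    edgeConn G = minDeg G := by
  classical
  have hne : Nonempty V := hG.nonempty
  have hmem : minDeg G ∈ {k | ∃ F : Finset (Sym2 V), ↑F ⊆ G.edgeSet ∧ F.card = k ∧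
      ¬ (G.deleteEdges ↑F).Connected} := by
    obtain ⟨v, hv⟩ : minDeg G ∈ {d | ∃ v : V, d = (G.neighborSet v).ncard} :=
      Nat.sInf_mem ⟨_, hne.some, rfl⟩
    refine ⟨G.incidenceFinset v, ?_, ?_, ?_⟩
    · intro e he
      exact G.incidenceSet_subset v (by simpa using he)
    · rw [hv, card_incidenceFinset_eq_degree, ← card_neighborSet_eq_degree,
        Set.ncard_eq_toFinset_card', Set.toFinset_card]
    · intro hc
      have : Nontrivial V := Fintype.one_lt_card_iff_nontrivial.1 (by omega)
      obtain ⟨w, hw⟩ := hc.preconnected.exists_adj_of_nontrivial v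
      rw [deleteEdges_adj] at hw
      apply hw.2
      simp [mk'_mem_incidenceSet_iff, hw.1]
  apply le_antisymm (Nat.sInf_le hmem)
  apply le_csInf ⟨_, hmem⟩
  rintro k ⟨F, -, rfl, hF⟩
  by_contra! hlt
  have hpre : ¬ (G.deleteEdges (F : Set (Sym2 V))).Preconnected := fun hp => hF ⟨hp⟩
  unfold Preconnected at hpre
  push Not at hpre
  obtain ⟨u, v, huv⟩ := hpre
  set S : Set V := {w | (G.deleteEdges (F : Set (Sym2 V))).Reachable u w} with hSdef
  have hS : ∀ x ∈ S, ∀ y ∉ S, G.Adj x y → s(x, y) ∈ F := by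
    intro x hx y hy hxy
    by_contra hn
    apply hy
    have : (G.deleteEdges (F : Set (Sym2 V))).Adj x y := by
      rw [deleteEdges_adj]; exact ⟨hxy, by simpa using hn⟩
    exact Reachable.trans hx this.reachable
  have h1 := side_aux G hbip F S hS hlt u (Reachable.refl u)
  have h2 := side_aux G hbip F Sᶜ (by
    intro x hx y hy hxy
    rw [Sym2.eq_swap]
    exact hS y (by simpa using hy) x hx hxy.symm) hlt v huv
  have h3 := Set.ncard_add_ncard_compl S
  rw [Nat.card_eq_fintype_card] at h3
  omega
end
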